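/- (Degree bound for the syndrome key equation) Let 1 ≤ t < m, set T = 2^t and k = 2^m − 2^t. Let u, r₀, σ, λ, q ∈ F[X] satisfy: deg u < k, deg r₀ < k, λ ≠ 0, deg λ ≤ T/2, deg q < deg λ, and u · λ = (r₀ + X_k · σ) · λ + q · s_m. Then deg( σ·λ + q·s_t ) ≤ T/2. -/

import Mathlib

open Polynomial Finset

/-- The GF(2)-linear span of `v 0, …, v (k-1)` as a `Finset`. -/
noncomputable def Vset {F : Type*} [Field F] (v : ℕ → F) (k : ℕ) : Finset F :=
  letI := Classical.decEq F
  (Finset.univ : Finset (Fin k → Bool)).image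
    (fun ε => ∑ j : Fin k, if ε j then v j else 0)

/-- The subspace polynomial `s_k(X) = ∏_{a ∈ V_k} (X - a)`. -/
noncomputable def sPoly {F : Type*} [Field F] (v : ℕ → F) (k : ℕ) : Polynomial F :=
  ∏ a ∈ Vset v k, (X - C a)

/-- The basis polynomial `X_i(X) = ∏_{j<m} s_j(X)^{i_j}`, where `i_j` is the
`j`-th binary digit of `i`. -/
noncomputable def XPoly {F : Type*} [Field F] (v : ℕ → F) (m i : ℕ) : Polynomial F :=
  ∏ j ∈ Finset.range m, (sPoly v j) ^ (Nat.testBit i j).toNat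

/-- The normalizing constant `p_i = ∏_{j<m} (s_j(v_j))^{i_j}`. -/
noncomputable def pCoef {F : Type*} [Field F] (v : ℕ → F) (m i : ℕ) : F :=
  ∏ j ∈ Finset.range m, ((sPoly v j).eval (v j)) ^ (Nat.testBit i j).toNat

/-- `v 0, …, v (m-1)` are linearly independent over the prime field GF(2). -/
def LinIndepGF2 {F : Type*} [Field F] (v : ℕ → F) (m : ℕ) : Prop :=
  ∀ ε : ℕ → Bool, (∑ j ∈ Finset.range m, if ε j then v j else 0) = 0 →
    ∀ j < m, ε j = false

/-!
The subspace polynomials satisfy `s_{l+1} = s_l (s_l + s_l(v_l))`, because the vanishing polynomial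
of a finite additive subgroup is an additive polynomial. Multiplying out this recurrence shows that
`P = X_k = s_t ⋯ s_{m-1}` satisfies `deg (P s_t - s_m) ≤ deg P = k`. Therefore
`P (σ λ + q s_t) = (u - r₀) λ + q (P s_t - s_m)`
has degree less than `k + deg λ`, and cancelling the monic factor `P` gives
`deg (σ λ + q s_t) < deg λ`.
-/

section VanishingPolynomial

variable {R : Type*} [CommRing R] {V : Finset R}

theorem eval_nodal_id_add_of_mem (hsub : ∀ a ∈ V, ∀ b ∈ V, a - b ∈ V) {a : R} (ha : a ∈ V)
    (x : R) : (Lagrange.nodal V id).eval (a + x) = (Lagrange.nodal V id).eval x := by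
  have mem_iff (b : R) : b ∈ V ↔ b - a ∈ V := by
    refine ⟨fun hb ↦ hsub b hb a ha, fun hb ↦ ?_⟩
    simpa using hsub _ hb _ (hsub _ (hsub a ha a ha) a ha)
  simp only [Lagrange.eval_nodal, id_eq]
  exact prod_equiv (Equiv.subRight a) mem_iff fun b _ ↦ by
    rw [Equiv.subRight_apply]
    ring

theorem nodal_id_comp_X_add_C [IsDomain R] (hne : V.Nonempty)
    (hsub : ∀ a ∈ V, ∀ b ∈ V, a - b ∈ V) (c : R) :
    (Lagrange.nodal V id).comp (X + C c) =
      Lagrange.nodal V id + C ((Lagrange.nodal V id).eval c) := by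
  set f := Lagrange.nodal V id
  have hf : f.Monic := Lagrange.nodal_monic
  have hdeg : f.degree = #V := Lagrange.degree_nodal
  have hC : (C (f.eval c)).degree < f.degree :=
    degree_C_le.trans_lt (by rw [hdeg]; exact_mod_cast hne.card_pos)
  have hcomp : (f.comp (X + C c)).degree = f.degree := by
    rw [degree_eq_natDegree (hf.comp_X_add_C c).ne_zero, degree_eq_natDegree hf.ne_zero,
      natDegree_comp, natDegree_X_add_C, mul_one]
  -- Two monic polynomials of degree `#V` that agree on `V` are equal; both are `f(c)` on `V`.
  refine eq_of_degree_le_of_eval_finset_eq V (hcomp.trans hdeg).le ?_ ?_ fun a ha ↦ ?_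
  · rw [hcomp, degree_add_eq_left_of_degree_lt hC]
  · rw [(hf.comp_X_add_C c).leadingCoeff, (hf.add_of_left hC).leadingCoeff]
  · have root : f.eval a = 0 := Lagrange.eval_nodal_at_node (v := id) ha
    simp only [eval_comp, eval_add, eval_X, eval_C, root, zero_add]
    exact eval_nodal_id_add_of_mem hsub ha c

end VanishingPolynomial

section DegreeBounds

variable {R : Type*} [CommRing R]

theorem degree_prod_Ico_mul_sub_le {s : ℕ → R[X]} {b : ℕ → R} {t n : ℕ} (htn : t ≤ n)
    (hmonic : ∀ l ∈ Ico t n, (s l).Monic)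
    (hsucc : ∀ l ∈ Ico t n, s (l + 1) = s l * (s l + C (b l))) :
    ((∏ l ∈ Ico t n, s l) * s t - s n).degree ≤ (∏ l ∈ Ico t n, s l).degree := by
  nontriviality R
  induction n, htn using Nat.le_induction with
  | base => simp
  | succ n htn ih =>
    have hsub : Ico t n ⊆ Ico t (n + 1) := Ico_subset_Ico_right n.le_succ
    have hn : n ∈ Ico t (n + 1) := mem_Ico.2 ⟨htn, n.lt_succ_self⟩
    have ih := ih (fun l hl ↦ hmonic l (hsub hl)) (fun l hl ↦ hsucc l (hsub hl))
    rw [prod_Ico_succ_top htn, hsucc n hn]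
    set P := ∏ l ∈ Ico t n, s l
    have hP : P.Monic := monic_prod_of_monic _ _ fun l hl ↦ hmonic l (hsub hl)
    calc (P * s n * s t - s n * (s n + C (b n))).degree
        = ((P * s t - s n - C (b n)) * s n).degree := by congr 1; ring
      _ = (P * s t - s n - C (b n)).degree + (s n).degree := (hmonic n hn).degree_mul
      _ ≤ P.degree + (s n).degree := by
          gcongr
          exact (degree_sub_le _ _).trans
            (max_le ih (degree_C_le.trans (zero_le_degree_iff.2 hP.ne_zero)))
      _ = (P * s n).degree := (hmonic n hn).degree_mul.symm

theorem degree_add_lt_of_key_equation {P A B u r σ lam q : R[X]} (hP : P.Monic)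
    (hAB : (P * A - B).degree ≤ P.degree) (hu : u.degree < P.degree) (hr : r.degree < P.degree)
    (hq : q.degree < lam.degree) (heq : u * lam = (r + P * σ) * lam + q * B) :
    (σ * lam + q * A).degree < lam.degree := by
  have hlam : lam.degree ≠ ⊥ := hq.ne_bot
  have hPbot : P.degree ≠ ⊥ := hu.ne_bot
  have hfst : ((u - r) * lam).degree < lam.degree + P.degree := by
    rw [add_comm]
    exact (degree_mul_le _ _).trans_lt
      (WithBot.add_lt_add_right hlam ((degree_sub_le _ _).trans_lt (max_lt hu hr)))
  have hsnd : (q * (P * A - B)).degree < lam.degree + P.degree :=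
    (degree_mul_le _ _).trans_lt
      ((add_le_add_right hAB _).trans_lt (WithBot.add_lt_add_right hPbot hq))
  refine lt_of_add_lt_add_right (a := P.degree) ?_
  calc (σ * lam + q * A).degree + P.degree
      = ((σ * lam + q * A) * P).degree := hP.degree_mul.symm
    _ = ((u - r) * lam + q * (P * A - B)).degree := by
        congr 1
        linear_combination -heq
    _ < lam.degree + P.degree := (degree_add_le _ _).trans_lt (max_lt hfst hsnd)

end DegreeBounds

theorem sum_Ico_two_pow {t m : ℕ} (htm : t ≤ m) : ∑ l ∈ Ico t m, 2 ^ l = 2 ^ m - 2 ^ t := by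
  have hle : 2 ^ t ≤ 2 ^ m := Nat.pow_le_pow_right two_pos htm
  zify [hle]
  simpa using geom_sum_Ico_mul (2 : ℤ) htm

theorem testBit_two_pow_sub_two_pow {t m : ℕ} (htm : t ≤ m) (j : ℕ) :
    (2 ^ m - 2 ^ t).testBit j = decide (j ∈ Ico t m) := by
  have hpos : 0 < 2 ^ t := Nat.two_pow_pos t
  have hle : 2 ^ t ≤ 2 ^ m := Nat.pow_le_pow_right two_pos htm
  have hbit := Nat.testBit_two_pow_sub_succ (x := 2 ^ t - 1) (n := m) (by lia) j
  rw [Nat.sub_add_cancel hpos, Nat.testBit_two_pow_sub_one] at hbit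
  simp [hbit, Bool.and_comm, ← decide_not]

section SubspacePolynomial

variable {F : Type*} [Field F] {v : ℕ → F} {k m t : ℕ} {a b : F}

theorem mem_Vset : a ∈ Vset v k ↔ ∃ ε : ℕ → Bool, ∑ j ∈ range k, (if ε j then v j else 0) = a := by
  simp only [Vset, mem_image, mem_univ, true_and, sum_range]
  constructor
  · rintro ⟨ε, rfl⟩
    exact ⟨fun j ↦ if h : j < k then ε ⟨j, h⟩ else false, by simp⟩
  · rintro ⟨ε, rfl⟩
    exact ⟨fun j ↦ ε j, rfl⟩

theorem sum_range_succ_update_ite (ε : ℕ → Bool) (β : Bool) :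
    ∑ j ∈ range (k + 1), (if Function.update ε k β j then v j else 0) =
      ∑ j ∈ range k, (if ε j then v j else 0) + if β then v k else 0 := by
  rw [sum_range_succ, Function.update_self]
  congr 1
  exact sum_congr rfl fun j hj ↦ by rw [Function.update_of_ne (mem_range.1 hj).ne]

theorem zero_mem_Vset (v : ℕ → F) (k : ℕ) : 0 ∈ Vset v k :=
  mem_Vset.2 ⟨fun _ ↦ false, by simp⟩

theorem Vset_zero (v : ℕ → F) : Vset v 0 = {0} := by
  ext a
  rw [mem_Vset, mem_singleton]
  simp [eq_comm (a := a)]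

theorem mem_Vset_succ : a ∈ Vset v (k + 1) ↔ a ∈ Vset v k ∨ a - v k ∈ Vset v k := by
  simp only [mem_Vset]
  constructor
  · rintro ⟨ε, rfl⟩
    rw [sum_range_succ]
    cases hk : ε k
    · exact .inl ⟨ε, by simp⟩
    · exact .inr ⟨ε, by simp⟩
  · rintro (⟨ε, hε⟩ | ⟨ε, hε⟩)
    · exact ⟨Function.update ε k false, by simp [sum_range_succ_update_ite, hε]⟩
    · exact ⟨Function.update ε k true, by simp [sum_range_succ_update_ite, hε]⟩

theorem sPoly_eq_nodal (v : ℕ → F) (k : ℕ) : sPoly v k = Lagrange.nodal (Vset v k) id := rfl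

theorem monic_sPoly (v : ℕ → F) (k : ℕ) : (sPoly v k).Monic :=
  Lagrange.nodal_monic

theorem XPoly_two_pow_sub_two_pow (v : ℕ → F) (htm : t ≤ m) :
    XPoly v m (2 ^ m - 2 ^ t) = ∏ l ∈ Ico t m, sPoly v l := by
  have hsub : Ico t m ⊆ range m := fun j hj ↦ mem_range.2 (mem_Ico.1 hj).2
  simp only [XPoly, testBit_two_pow_sub_two_pow htm]
  rw [← prod_subset hsub fun j _ hj ↦ by simp [hj]]
  exact prod_congr rfl fun j hj ↦ by simp [hj]

theorem LinIndepGF2.mono (hv : LinIndepGF2 v m) (hkm : k ≤ m) : LinIndepGF2 v k := by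
  intro ε hε j hj
  have hsum : ∑ i ∈ range m, (if (decide (i < k) && ε i) then v i else 0) = 0 := by
    rw [← sum_subset (range_subset_range.2 hkm) fun i _ hi ↦ by simp_all]
    exact (sum_congr rfl fun i hi ↦ by simp [mem_range.1 hi]).trans hε
  simpa [hj] using hv _ hsum j (hj.trans_le hkm)

variable [CharP F 2]

theorem sub_mem_Vset (ha : a ∈ Vset v k) (hb : b ∈ Vset v k) : a - b ∈ Vset v k := by
  induction k generalizing a b with
  | zero => simp_all [Vset_zero]
  | succ k ih =>
    rw [mem_Vset_succ] at ha hb ⊢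
    rcases ha with ha | ha <;> rcases hb with hb | hb
    · exact .inl (ih ha hb)
    · have hswap : a - b - v k = a - (b - v k) := by
        rw [sub_sub_eq_add_sub, CharTwo.sub_eq_add, sub_add_eq_add_sub]
      exact .inr (hswap ▸ ih ha hb)
    · exact .inr (by simpa [sub_right_comm] using ih ha hb)
    · exact .inl (by simpa using ih ha hb)

theorem LinIndepGF2.notMem_Vset (hv : LinIndepGF2 v (k + 1)) : v k ∉ Vset v k := by
  intro hmem
  obtain ⟨ε, hε⟩ := mem_Vset.1 hmem
  have hsum := (sum_range_succ_update_ite (v := v) (k := k) ε true).trans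
    (by rw [hε, if_pos rfl, CharTwo.add_self_eq_zero])
  simpa using hv _ hsum k k.lt_succ_self

theorem LinIndepGF2.disjoint_Vset_map_add (hv : LinIndepGF2 v (k + 1)) :
    Disjoint (Vset v k) ((Vset v k).map (addRightEmbedding (v k))) := by
  refine disjoint_left.2 fun a ha hmap ↦ ?_
  obtain ⟨b, hb, rfl⟩ := mem_map.1 hmap
  exact hv.notMem_Vset (by simpa using sub_mem_Vset ha hb)

theorem LinIndepGF2.Vset_succ (hv : LinIndepGF2 v (k + 1)) :
    Vset v (k + 1) = (Vset v k).disjUnion ((Vset v k).map (addRightEmbedding (v k)))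
      hv.disjoint_Vset_map_add := by
  ext a
  simp [mem_Vset_succ, ← eq_sub_iff_add_eq]

theorem LinIndepGF2.card_Vset (hv : LinIndepGF2 v k) : #(Vset v k) = 2 ^ k := by
  induction k with
  | zero => simp [Vset_zero]
  | succ k ih =>
    rw [hv.Vset_succ, card_disjUnion, card_map, ih (hv.mono k.le_succ), pow_succ, mul_two]

theorem LinIndepGF2.natDegree_sPoly (hv : LinIndepGF2 v k) : (sPoly v k).natDegree = 2 ^ k := by
  rw [sPoly_eq_nodal, Lagrange.natDegree_nodal, hv.card_Vset]

theorem sPoly_comp_X_add_C (v : ℕ → F) (k : ℕ) (c : F) :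
    (sPoly v k).comp (X + C c) = sPoly v k + C ((sPoly v k).eval c) :=
  nodal_id_comp_X_add_C ⟨0, zero_mem_Vset v k⟩ (fun _ ha _ hb ↦ sub_mem_Vset ha hb) c

theorem LinIndepGF2.sPoly_succ (hv : LinIndepGF2 v (k + 1)) :
    sPoly v (k + 1) = sPoly v k * (sPoly v k + C ((sPoly v k).eval (v k))) := by
  rw [← sPoly_comp_X_add_C]
  simp only [sPoly, hv.Vset_succ, prod_disjUnion, prod_map, Polynomial.prod_comp]
  congr 1
  refine prod_congr rfl fun a _ ↦ ?_
  rw [addRightEmbedding_apply, C_add, sub_comp, X_comp, C_comp, ← CharTwo.sub_eq_add X]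
  ring

theorem LinIndepGF2.natDegree_prod_Ico_sPoly (hv : LinIndepGF2 v m) (htm : t ≤ m) :
    (∏ l ∈ Ico t m, sPoly v l).natDegree = 2 ^ m - 2 ^ t := by
  rw [natDegree_prod_of_monic _ _ fun l _ ↦ monic_sPoly v l, ← sum_Ico_two_pow htm]
  exact sum_congr rfl fun l hl ↦ (hv.mono (mem_Ico.1 hl).2.le).natDegree_sPoly

theorem syndrome_key_equation_general (hv : LinIndepGF2 v m) (htm : t ≤ m) {u r₀ σ lam q : F[X]}
    (hu : u.degree < ((2 ^ m - 2 ^ t : ℕ) : WithBot ℕ))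
    (hr₀ : r₀.degree < ((2 ^ m - 2 ^ t : ℕ) : WithBot ℕ))
    (hq : q.degree < lam.degree)
    (heq : u * lam = (r₀ + XPoly v m (2 ^ m - 2 ^ t) * σ) * lam + q * sPoly v m) :
    (σ * lam + q * sPoly v t).degree < lam.degree := by
  rw [XPoly_two_pow_sub_two_pow v htm] at heq
  have hmonic : (∏ l ∈ Ico t m, sPoly v l).Monic :=
    monic_prod_of_monic _ _ fun l _ ↦ monic_sPoly v l
  have hdeg : (∏ l ∈ Ico t m, sPoly v l).degree = (2 ^ m - 2 ^ t : ℕ) := by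
    rw [degree_eq_natDegree hmonic.ne_zero, hv.natDegree_prod_Ico_sPoly htm]
  refine degree_add_lt_of_key_equation hmonic ?_ (hdeg ▸ hu) (hdeg ▸ hr₀) hq heq
  exact degree_prod_Ico_mul_sub_le htm (fun l _ ↦ monic_sPoly v l)
    fun l hl ↦ (hv.mono (mem_Ico.1 hl).2).sPoly_succ

end SubspacePolynomial

/-- degree bound for the syndrome key equation: with `T = 2^t`,
`k = 2^m - 2^t`, if `u·λ = (r₀ + X_k·σ)·λ + q·s_m` with the stated degree
bounds, then `deg(σ·λ + q·s_t) ≤ T/2`. -/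
theorem syndrome_key_equation {F : Type*} [Field F] [Fintype F] (m : ℕ) (hm : 1 ≤ m)
    (hcard : Fintype.card F = 2 ^ m) (v : ℕ → F) (hv : LinIndepGF2 v m)
    (t : ℕ) (ht1 : 1 ≤ t) (htm : t < m)
    (u r₀ σ lam q : Polynomial F)
    (hu : u.degree < ((2 ^ m - 2 ^ t : ℕ) : WithBot ℕ))
    (hr₀ : r₀.degree < ((2 ^ m - 2 ^ t : ℕ) : WithBot ℕ))
    (hlam : lam ≠ 0)
    (hlamdeg : lam.degree ≤ ((2 ^ t / 2 : ℕ) : WithBot ℕ))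
    (hq : q.degree < lam.degree)
    (heq : u * lam = (r₀ + XPoly v m (2 ^ m - 2 ^ t) * σ) * lam + q * sPoly v m) :
    (σ * lam + q * sPoly v t).degree ≤ ((2 ^ t / 2 : ℕ) : WithBot ℕ) := by
  have : CharP F 2 := charP_of_card_eq_prime_pow hcard
  exact ((syndrome_key_equation_general hv htm.le hu hr₀ hq heq).trans_le hlamdeg).le
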